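/- arXiv:1205.4889 — 2 statements merged into one kernel-verified Lean document; each statement's English description precedes it below -/
import Mathlib

section
/- If there exists a Nash equilibrium in a quantitative multiplayer reachability game G, then there exists a finite-memory Nash equilibrium of the same type in G. -/
/-- A quantitative multiplayer reachability game: a finite directed graph whose
vertex set is partitioned among the players (via `owner`), with an initial vertex `v0`,
an edge relation `E` such that every vertex has an outgoing edge, and a goal set
`goal i` for each player `i`. -/
structure ReachGame (P : Type) (V : Type) where
  owner : V → P
  v0 : V
  E : V → V → Prop
  total : ∀ v : V, ∃ w : V, E v w
  goal : P → Set V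

namespace ReachGame

variable {P V : Type} [DecidableEq P] (G : ReachGame P V)

/-- The last vertex of a history (with default `v0`). -/
def lastV (h : List V) : V := h.getLastD G.v0

/-- A history: a nonempty finite path in the graph starting at `v0`. -/
def IsHistory (h : List V) : Prop :=
  h ≠ [] ∧ h.head? = some G.v0 ∧ List.Chain' G.E h

/-- A play: an infinite path starting at `v0`. -/
def IsPlay (ρ : ℕ → V) : Prop :=
  ρ 0 = G.v0 ∧ ∀ k : ℕ, G.E (ρ k) (ρ (k + 1))

/-- `σ` is a (total encoding of a) strategy of player `i`: on every history ending in
a vertex owned by `i` it chooses a successor along an edge. -/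
def IsStrategy (i : P) (σ : List V → V) : Prop :=
  ∀ h : List V, G.IsHistory h → G.owner (G.lastV h) = i → G.E (G.lastV h) (σ h)

/-- A strategy profile: one strategy per player. -/
def IsProfile (prof : P → List V → V) : Prop :=
  ∀ i : P, G.IsStrategy i (prof i)

/-- The history of length `n` (i.e. with `n` edges) obtained by letting the players
follow the profile `prof` from `v0`. -/
def outHist (prof : P → List V → V) : ℕ → List V
  | 0 => [G.v0]
  | n + 1 => outHist prof n ++ [prof (G.owner (G.lastV (outHist prof n))) (outHist prof n)]

/-- The outcome play of the strategy profile `prof`. -/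
def outcome (prof : P → List V → V) (n : ℕ) : V :=
  G.lastV (G.outHist prof n)

/-- The cost of player `i` for the play `ρ`: the least `l` with `ρ l ∈ goal i`,
and `⊤` (`+∞`) if there is no such `l`. -/
noncomputable def cost (i : P) (ρ : ℕ → V) : ℕ∞ :=
  sInf {n : ℕ∞ | ∃ l : ℕ, n = (l : ℕ∞) ∧ ρ l ∈ G.goal i}

/-- Nash equilibrium: no player can strictly decrease his cost by a unilateral
deviation. -/
def IsNash (prof : P → List V → V) : Prop :=
  ∀ (j : P) (σ' : List V → V), G.IsStrategy j σ' →
    G.cost j (G.outcome prof) ≤ G.cost j (G.outcome (Function.update prof j σ'))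

/-- `h ≈_σ h'` : the strategy `σ` of player `i` behaves the same after `h` and `h'`,
i.e. `σ (h ++ δ) = σ (h' ++ δ)` for every suffix `δ` making both `h ++ δ` and
`h' ++ δ` histories ending in a vertex of player `i`. -/
def MemEq (i : P) (σ : List V → V) (h h' : List V) : Prop :=
  ∀ δ : List V,
    G.IsHistory (h ++ δ) → G.owner (G.lastV (h ++ δ)) = i →
    G.IsHistory (h' ++ δ) → G.owner (G.lastV (h' ++ δ)) = i →
    σ (h ++ δ) = σ (h' ++ δ)

/-- A strategy of player `i` is finite-memory if the relation `≈_σ` has finitely many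
equivalence classes on histories, i.e. there is a finite set of histories meeting
every class. -/
def FiniteMemory (i : P) (σ : List V → V) : Prop :=
  ∃ S : Finset (List V), ∀ h : List V, G.IsHistory h →
    ∃ h' ∈ S, G.IsHistory h' ∧ G.MemEq i σ h h'

/-- A profile is finite-memory if each of its strategies is. -/
def FiniteMemoryProfile (prof : P → List V → V) : Prop :=
  ∀ i : P, G.FiniteMemory i (prof i)

/-- `Visit h`: the set of players whose goal set is visited by the finite path `h`. -/
def visitL (h : List V) : Set P := {i : P | ∃ v ∈ h, v ∈ G.goal i}

/-- The type of a strategy profile: the set of players whose goal set is visited by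
the outcome. -/
def typeOf (prof : P → List V → V) : Set P :=
  {i : P | ∃ l : ℕ, G.outcome prof l ∈ G.goal i}

/-! ### The truncated game `G^d` -/

/-- A strategy of player `i` in the truncated game `G^d` : it chooses a successor on
every history with less than `d` edges (list length `≤ d`) ending in a vertex of `i`. -/
def IsStrategyTrunc (d : ℕ) (i : P) (σ : List V → V) : Prop :=
  ∀ h : List V, G.IsHistory h → h.length ≤ d → G.owner (G.lastV h) = i →
    G.E (G.lastV h) (σ h)

/-- A strategy profile of the truncated game `G^d`. -/
def IsProfileTrunc (d : ℕ) (prof : P → List V → V) : Prop :=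
  ∀ i : P, G.IsStrategyTrunc d i (prof i)

/-- The cost of player `i` for a finite play `h` (a list of vertices): the least
position of `h` lying in `goal i`, and `⊤` if `goal i` is not visited. -/
noncomputable def costList (i : P) (h : List V) : ℕ∞ :=
  sInf {n : ℕ∞ | ∃ l : ℕ, n = (l : ℕ∞) ∧ l < h.length ∧ h.getD l G.v0 ∈ G.goal i}

/-- Nash equilibrium of the truncated game `G^d` (whose plays are the histories with
exactly `d` edges). -/
def IsNashTrunc (d : ℕ) (prof : P → List V → V) : Prop :=
  ∀ (j : P) (σ' : List V → V), G.IsStrategyTrunc d j σ' →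
    G.costList j (G.outHist prof d) ≤
      G.costList j (G.outHist (Function.update prof j σ') d)

/-- The type of a strategy profile of the truncated game `G^d`. -/
def typeOfTrunc (d : ℕ) (prof : P → List V → V) : Set P :=
  G.visitL (G.outHist prof d)

end ReachGame

/-!
Call a play stable if, whenever it passes at time `n` through a vertex from which player `j` can
force a visit to his goal set within `m` steps, it visits that set by time `n + m`. The outcome of
a Nash equilibrium is stable, since otherwise `j` would deviate to such an attack. Once every vertex
of the outcome has appeared, the path can be closed to a lasso, which visits the same vertices, each
for the first time at the same moment; so it is stable too and has the same type. Conversely a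
stable lasso is the outcome of a finite-memory Nash equilibrium: the players remember only their
position on the lasso and, once somebody has left it, who did. From then on all others play an
optimal positional strategy against him, so that by stability the deviation does not pay off.
-/

namespace ReachGame

variable {P V : Type} {G : ReachGame P V}

/-! ### Attractors -/

/-- The controllable predecessors of `S` for player `j`: the vertices from which `j` can ensure
that the next vertex lies in `S`, whatever the other players do. -/
def controllablePre (G : ReachGame P V) (j : P) (S : Set V) : Set V :=
  {v | (G.owner v = j ∧ ∃ w ∈ S, G.E v w) ∨ (G.owner v ≠ j ∧ ∀ w, G.E v w → w ∈ S)}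

/-- The vertices from which player `j` can force a visit to his goal set within `m` steps. -/
def attractor (G : ReachGame P V) (j : P) : ℕ → Set V
  | 0 => G.goal j
  | m + 1 => G.goal j ∪ G.controllablePre j (attractor G j m)

theorem controllablePre_mono (j : P) : Monotone (G.controllablePre j) := by
  rintro S T hST v (⟨hv, w, hw, hvw⟩ | ⟨hv, hall⟩)
  · exact Or.inl ⟨hv, w, hST hw, hvw⟩
  · exact Or.inr ⟨hv, fun w hvw => hST (hall w hvw)⟩

theorem attractor_mono (j : P) : Monotone (G.attractor j) := by
  refine monotone_nat_of_le_succ fun m => ?_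
  induction m with
  | zero => exact Set.subset_union_left
  | succ m ih => exact Set.union_subset_union_right _ (controllablePre_mono j ih)

theorem mem_attractor_succ_of_owner_eq {j : P} {v w : V} {m : ℕ} (hv : G.owner v = j)
    (hvw : G.E v w) (hw : w ∈ G.attractor j m) : v ∈ G.attractor j (m + 1) :=
  Or.inr (Or.inl ⟨hv, w, hw, hvw⟩)

theorem mem_attractor_of_owner_ne {j : P} {v w : V} {m : ℕ} (hv : G.owner v ≠ j)
    (hgoal : v ∉ G.goal j) (hvm : v ∈ G.attractor j (m + 1)) (hvw : G.E v w) :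
    w ∈ G.attractor j m := by
  obtain hg | ⟨hj, -⟩ | ⟨-, hall⟩ := hvm
  · exact absurd hg hgoal
  · exact absurd hj hv
  · exact hall w hvw

/-- `att` is an optimal positional attack of player `j`: from each of his own vertices it
enters every attractor that a single move can enter. -/
def IsAttack (G : ReachGame P V) (j : P) (att : V → V) : Prop :=
  ∀ v, G.E v (att v) ∧
    (G.owner v = j → v ∉ G.goal j → ∀ m, v ∈ G.attractor j (m + 1) → att v ∈ G.attractor j m)

/-- `pun j` is an optimal positional strategy of the coalition against player `j`, for each `j`:
at the vertices of the coalition it delays the visit to the goal set of `j` as long as possible. -/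
def IsPunishment (G : ReachGame P V) (pun : P → V → V) : Prop :=
  ∀ j v, G.E v (pun j v) ∧
    (G.owner v ≠ j → ∀ m, pun j v ∈ G.attractor j m → v ∈ G.attractor j (m + 1))

theorem exists_isAttack (G : ReachGame P V) (j : P) : ∃ att, G.IsAttack j att := by
  classical
  have hmove : ∀ v, ∃ w, G.E v w ∧
      (G.owner v = j → v ∉ G.goal j → ∀ m, v ∈ G.attractor j (m + 1) → w ∈ G.attractor j m) := by
    intro v
    by_cases hv : (G.owner v = j ∧ v ∉ G.goal j) ∧ ∃ m, v ∈ G.attractor j (m + 1)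
    · obtain ⟨⟨hj, hgoal⟩, hex⟩ := hv
      obtain hg | ⟨-, w, hw, hvw⟩ | ⟨hne, -⟩ := Nat.find_spec hex
      · exact absurd hg hgoal
      · exact ⟨w, hvw, fun _ _ m hm => attractor_mono j (Nat.find_min' hex hm) hw⟩
      · exact absurd hj hne
    · obtain ⟨w, hvw⟩ := G.total v
      exact ⟨w, hvw, fun hj hgoal m hm => absurd ⟨⟨hj, hgoal⟩, m, hm⟩ hv⟩
  choose att hatt using hmove
  exact ⟨att, hatt⟩

theorem exists_forall_mem_attractor_succ {j : P} {v : V} (hfin : {w | G.E v w}.Finite)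
    (hv : G.owner v ≠ j) :
    ∃ w, G.E v w ∧ ∀ m, w ∈ G.attractor j m → v ∈ G.attractor j (m + 1) := by
  by_contra! hcon
  choose! rank hrank using hcon
  obtain ⟨u, hu, hmax⟩ := Set.exists_max_image {w | G.E v w} rank hfin (G.total v)
  exact (hrank u hu).2
    (Or.inr (Or.inr ⟨hv, fun w hw => attractor_mono j (hmax w hw) (hrank w hw).1⟩))

theorem exists_isPunishment (G : ReachGame P V) (hfin : ∀ v, {w | G.E v w}.Finite) :
    ∃ pun, G.IsPunishment pun := by
  have hmove : ∀ j v, ∃ w, G.E v w ∧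
      (G.owner v ≠ j → ∀ m, w ∈ G.attractor j m → v ∈ G.attractor j (m + 1)) := by
    intro j v
    by_cases hv : G.owner v = j
    · obtain ⟨w, hvw⟩ := G.total v
      exact ⟨w, hvw, fun hne => absurd hv hne⟩
    · obtain ⟨w, hvw, hw⟩ := exists_forall_mem_attractor_succ (hfin v) hv
      exact ⟨w, hvw, fun _ => hw⟩
  choose pun hpun using hmove
  exact ⟨pun, hpun⟩

/-! ### Costs -/

theorem cost_le {j : P} {ρ : ℕ → V} {l : ℕ} (h : ρ l ∈ G.goal j) : G.cost j ρ ≤ l :=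
  sInf_le ⟨l, rfl, h⟩

theorem le_cost {j : P} {ρ : ℕ → V} {c : ℕ∞} (h : ∀ l : ℕ, ρ l ∈ G.goal j → c ≤ l) :
    c ≤ G.cost j ρ := by
  refine le_sInf ?_
  rintro _ ⟨l, rfl, hl⟩
  exact h l hl

/-- `ρ` visits each vertex of `π` at least as early as `π` does. -/
def Anticipates (ρ π : ℕ → V) : Prop := ∀ n, ∃ l ≤ n, ρ l = π n

theorem Anticipates.cost_le_cost {ρ π : ℕ → V} (h : Anticipates ρ π) (j : P) :
    G.cost j ρ ≤ G.cost j π := by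
  refine le_cost fun n hn => ?_
  obtain ⟨l, hln, hl⟩ := h n
  exact (cost_le (hl ▸ hn)).trans (Nat.cast_le.2 hln)

theorem Anticipates.typeOf_subset {prof τ : P → List V → V}
    (h : Anticipates (G.outcome τ) (G.outcome prof)) : G.typeOf prof ⊆ G.typeOf τ := by
  rintro j ⟨n, hn⟩
  obtain ⟨l, -, hl⟩ := h n
  exact ⟨l, hl ▸ hn⟩

theorem cost_le_of_forall_attack {j : P} {ρ : ℕ → V} {k m : ℕ}
    (hE : ∀ n, G.E (ρ n) (ρ (n + 1)))
    (hatt : ∀ n, k ≤ n → G.owner (ρ n) = j → ρ n ∉ G.goal j →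
      ∀ m, ρ n ∈ G.attractor j (m + 1) → ρ (n + 1) ∈ G.attractor j m)
    (hk : ρ k ∈ G.attractor j m) : G.cost j ρ ≤ ((k + m : ℕ) : ℕ∞) := by
  induction m generalizing k with
  | zero => exact cost_le hk
  | succ m ih =>
    by_cases hgoal : ρ k ∈ G.goal j
    · exact (cost_le hgoal).trans (Nat.cast_le.2 (Nat.le_add_right k (m + 1)))
    have hnext : ρ (k + 1) ∈ G.attractor j m := by
      by_cases hj : G.owner (ρ k) = j
      · exact hatt k le_rfl hj hgoal m hk
      · exact mem_attractor_of_owner_ne hj hgoal hk (hE k)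
    rw [← Nat.succ_add_eq_add_succ]
    exact ih (fun n hn => hatt n (Nat.le_of_succ_le hn)) hnext

/-! ### Histories and outcomes -/

theorem lastV_append (h δ : List V) : G.lastV (h ++ δ) = δ.getLastD (G.lastV h) := by
  simp [lastV, List.getLastD_eq_getLast?, List.getLast?_append, Option.getD_or]

theorem lastV_concat (h : List V) (w : V) : G.lastV (h ++ [w]) = w :=
  lastV_append h [w]

theorem IsHistory.concat {h : List V} {w : V} (hh : G.IsHistory h) (hw : G.E (G.lastV h) w) :
    G.IsHistory (h ++ [w]) := by
  obtain ⟨hne, hhead, hchain⟩ := hh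
  refine ⟨List.concat_ne_nil w h, ?_, ?_⟩
  · rw [List.head?_append_of_ne_nil h hne, hhead]
  · refine hchain.append (List.isChain_singleton w) fun x hx y hy => ?_
    have hlast : G.lastV h = x := by
      rw [lastV, List.getLastD_eq_getLast?, Option.mem_def.1 hx, Option.getD_some]
    rwa [← hlast, ← Option.mem_some_iff.1 hy]

theorem isHistory_outHist {prof : P → List V → V} (hprof : G.IsProfile prof) (n : ℕ) :
    G.IsHistory (G.outHist prof n) := by
  induction n with
  | zero => exact ⟨List.cons_ne_nil _ _, rfl, List.isChain_singleton _⟩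
  | succ n ih => exact ih.concat (hprof _ _ ih rfl)

theorem length_outHist (prof : P → List V → V) (n : ℕ) :
    (G.outHist prof n).length = n + 1 := by
  induction n with
  | zero => rfl
  | succ n ih => rw [outHist, List.length_append, ih, List.length_singleton]

theorem outHist_ne_nil (prof : P → List V → V) (n : ℕ) : G.outHist prof n ≠ [] :=
  List.ne_nil_of_length_eq_add_one (length_outHist prof n)

theorem head?_outHist (prof : P → List V → V) (n : ℕ) :
    (G.outHist prof n).head? = some G.v0 := by
  induction n with
  | zero => rfl
  | succ n ih => rw [outHist, List.head?_append_of_ne_nil _ (outHist_ne_nil prof n), ih]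

theorem outHist_congr {prof prof' : P → List V → V} {n : ℕ}
    (h : ∀ i (l : List V), l.length ≤ n → prof i l = prof' i l) :
    G.outHist prof n = G.outHist prof' n := by
  induction n with
  | zero => rfl
  | succ n ih =>
    have hn : G.outHist prof n = G.outHist prof' n :=
      ih fun i l hl => h i l (Nat.le_succ_of_le hl)
    rw [outHist, outHist, hn, h _ _ (length_outHist prof' n).le]

theorem outcome_succ (prof : P → List V → V) (n : ℕ) :
    G.outcome prof (n + 1) = prof (G.owner (G.outcome prof n)) (G.outHist prof n) :=
  lastV_concat _ _

theorem isPlay_outcome {prof : P → List V → V} (hprof : G.IsProfile prof) :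
    G.IsPlay (G.outcome prof) := by
  refine ⟨rfl, fun n => ?_⟩
  rw [outcome_succ]
  exact hprof _ _ (isHistory_outHist hprof n) rfl

theorem IsProfile.update [DecidableEq P] {prof : P → List V → V} (hprof : G.IsProfile prof)
    {j : P} {σ : List V → V} (hσ : G.IsStrategy j σ) :
    G.IsProfile (Function.update prof j σ) :=
  (Function.forall_update_iff prof fun i σ => G.IsStrategy i σ).2 ⟨hσ, fun i _ => hprof i⟩

/-! ### Stable plays -/

/-- A play is stable if no player can force, from any vertex of the play, a visit to his goal set
that is earlier than the one the play grants him. -/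
def IsStable (G : ReachGame P V) (ρ : ℕ → V) : Prop :=
  ∀ j n m, ρ n ∈ G.attractor j m → G.cost j ρ ≤ ((n + m : ℕ) : ℕ∞)

theorem IsStable.of_anticipates {ρ π : ℕ → V} (hρ : G.IsStable ρ) (hρπ : Anticipates ρ π)
    (hπρ : Anticipates π ρ) : G.IsStable π := by
  intro j n m hm
  obtain ⟨l, hln, hl⟩ := hρπ n
  calc G.cost j π ≤ G.cost j ρ := hπρ.cost_le_cost j
    _ ≤ ((l + m : ℕ) : ℕ∞) := hρ j l m (hl ▸ hm)
    _ ≤ ((n + m : ℕ) : ℕ∞) := Nat.cast_le.2 (Nat.add_le_add_right hln m)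

/-- The strategy that follows `σ` during the first `k` moves of a play and plays the
positional strategy `att` afterwards. -/
def switchAfter (G : ReachGame P V) (k : ℕ) (σ : List V → V) (att : V → V) (h : List V) : V :=
  if h.length ≤ k then σ h else att (G.lastV h)

theorem IsStrategy.switchAfter {j : P} {σ : List V → V} {att : V → V} (hσ : G.IsStrategy j σ)
    (hatt : ∀ v, G.E v (att v)) (k : ℕ) : G.IsStrategy j (G.switchAfter k σ att) := by
  intro h hh hj
  rw [ReachGame.switchAfter]
  split_ifs
  · exact hσ h hh hj
  · exact hatt _

theorem outcome_update_switchAfter [DecidableEq P] (prof : P → List V → V) (j : P) (k : ℕ)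
    (att : V → V) :
    G.outcome (Function.update prof j (G.switchAfter k (prof j) att)) k = G.outcome prof k := by
  refine congrArg G.lastV (outHist_congr fun i l hl => ?_)
  obtain rfl | hij := eq_or_ne i j
  · rw [Function.update_self, switchAfter, if_pos hl]
  · rw [Function.update_of_ne hij]

theorem outcome_succ_update_switchAfter [DecidableEq P] (prof : P → List V → V) {j : P} {k n : ℕ}
    (σ : List V → V) (att : V → V) (hkn : k ≤ n)
    (hj : G.owner (G.outcome (Function.update prof j (G.switchAfter k σ att)) n) = j) :
    G.outcome (Function.update prof j (G.switchAfter k σ att)) (n + 1) =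
      att (G.outcome (Function.update prof j (G.switchAfter k σ att)) n) := by
  rw [outcome_succ, hj, Function.update_self, switchAfter, length_outHist,
    if_neg (Nat.not_le.2 (Nat.lt_succ_of_le hkn)), outcome]

theorem IsNash.isStable_outcome [DecidableEq P] {prof : P → List V → V} (hnash : G.IsNash prof)
    (hprof : G.IsProfile prof) : G.IsStable (G.outcome prof) := by
  intro j k m hm
  obtain ⟨att, hatt⟩ := G.exists_isAttack j
  have hσ : G.IsStrategy j (G.switchAfter k (prof j) att) :=
    (hprof j).switchAfter (fun v => (hatt v).1) k
  refine (hnash j _ hσ).trans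
    (cost_le_of_forall_attack (isPlay_outcome (hprof.update hσ)).2 ?_ ?_)
  · intro n hkn hj hgoal m hm
    rw [outcome_succ_update_switchAfter prof _ att hkn hj]
    exact (hatt _).2 hj hgoal m hm
  · rwa [outcome_update_switchAfter]

/-! ### Strategies computed by an automaton -/

/-- The state of an automaton with transition function `δ` after reading a history. The automaton
starts in `m₀` at the initial vertex, so that the head of the history is not read. -/
def runMemory {M : Type*} (δ : M → V → M) (m₀ : M) (h : List V) : M := h.tail.foldl δ m₀

theorem runMemory_append {M : Type*} (δ : M → V → M) (m₀ : M) {h : List V} (hh : h ≠ [])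
    (t : List V) : runMemory δ m₀ (h ++ t) = t.foldl δ (runMemory δ m₀ h) := by
  rw [runMemory, List.tail_append_of_ne_nil hh, List.foldl_append, runMemory]

theorem runMemory_outHist_succ {M : Type*} (δ : M → V → M) (m₀ : M) (prof : P → List V → V)
    (n : ℕ) : runMemory δ m₀ (G.outHist prof (n + 1)) =
      δ (runMemory δ m₀ (G.outHist prof n)) (G.outcome prof (n + 1)) := by
  rw [outcome_succ, outHist, runMemory_append δ m₀ (outHist_ne_nil prof n)]
  rfl

theorem finiteMemory_of_runMemory [Finite V] {M : Type*} [Finite M] (i : P) (δ : M → V → M)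
    (m₀ : M) (act : M → V → V) :
    G.FiniteMemory i fun h => act (runMemory δ m₀ h) (G.lastV h) := by
  let config : {h // G.IsHistory h} → M × V := fun h => (runMemory δ m₀ h.1, G.lastV h.1)
  let rep : Set.range config → List V := fun c => (Set.rangeSplitting config c).1
  refine ⟨(Set.finite_range rep).toFinset, fun h hh => ?_⟩
  let c : Set.range config := ⟨config ⟨h, hh⟩, ⟨h, hh⟩, rfl⟩
  have hrep : G.IsHistory (rep c) := (Set.rangeSplitting config c).2
  refine ⟨rep c, by simp, hrep, fun t _ _ _ _ => ?_⟩
  have hconfig : (runMemory δ m₀ (rep c), G.lastV (rep c)) = (runMemory δ m₀ h, G.lastV h) :=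
    Set.apply_rangeSplitting config c
  obtain ⟨hmem, hlast⟩ := Prod.mk.inj hconfig
  simp only [runMemory_append δ m₀ hh.1, runMemory_append δ m₀ hrep.1, lastV_append, hmem, hlast]

/-! ### Finite presentations of plays -/

/-- A presentation of a play as the sequence of labels along the orbit of `start` under `next`. If
`K` is finite, the presented play is a lasso. -/
structure PlayPresentation (G : ReachGame P V) (K : Type*) where
  label : K → V
  next : K → K
  start : K
  label_start : label start = G.v0
  edge : ∀ k, G.E (label k) (label (next k))

/-- The play given by a presentation. -/
def PlayPresentation.play {K : Type*} (L : G.PlayPresentation K) (n : ℕ) : V :=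
  L.label (L.next^[n] L.start)

/-- The successor on a lasso with positions `0, …, b` whose last position is followed by `a`. -/
def lassoNext {b : ℕ} (a k : Fin (b + 1)) : Fin (b + 1) :=
  if k = Fin.last b then a else k + 1

theorem val_lassoNext_of_lt {b : ℕ} (a : Fin (b + 1)) {k : Fin (b + 1)} (hk : (k : ℕ) < b) :
    (lassoNext a k : ℕ) = k + 1 := by
  have hlt : k < Fin.last b := hk
  rw [lassoNext, if_neg hlt.ne, Fin.val_add_one_of_lt hlt]

theorem val_lassoNext_le {b : ℕ} (a k : Fin (b + 1)) : (lassoNext a k : ℕ) ≤ k + 1 := by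
  obtain rfl | hlt := (Fin.le_last k).eq_or_lt
  · exact (lassoNext a (Fin.last b)).2.le
  · exact (val_lassoNext_of_lt a hlt).le

theorem val_iterate_lassoNext_le {b : ℕ} (a : Fin (b + 1)) (n : ℕ) :
    ((lassoNext a)^[n] 0 : ℕ) ≤ n := by
  induction n with
  | zero => exact le_rfl
  | succ n ih =>
    rw [Function.iterate_succ_apply']
    exact (val_lassoNext_le a _).trans (Nat.succ_le_succ ih)

theorem val_iterate_lassoNext_of_le {b n : ℕ} (a : Fin (b + 1)) (hn : n ≤ b) :
    ((lassoNext a)^[n] 0 : ℕ) = n := by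
  induction n with
  | zero => rfl
  | succ n ih =>
    have hval : ((lassoNext a)^[n] 0 : ℕ) = n := ih (Nat.le_of_succ_le hn)
    rw [Function.iterate_succ_apply', val_lassoNext_of_lt a (hval.trans_lt hn), hval]

/-- The lasso that follows the play `ρ` up to position `b` and then jumps back to position `a`. -/
def IsPlay.lasso {ρ : ℕ → V} (hρ : G.IsPlay ρ) {b : ℕ} (a : Fin (b + 1)) (hab : ρ a = ρ (b + 1)) :
    G.PlayPresentation (Fin (b + 1)) where
  label k := ρ k
  next := lassoNext a
  start := 0
  label_start := hρ.1
  edge k := by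
    obtain rfl | hlt := (Fin.le_last k).eq_or_lt
    · rw [lassoNext, if_pos rfl, hab]
      exact hρ.2 b
    · rw [val_lassoNext_of_lt a hlt]
      exact hρ.2 k

theorem exists_forall_exists_le_apply_eq {α : Type*} [Finite α] (u : ℕ → α) :
    ∃ b, ∀ n, ∃ l ≤ b, l ≤ n ∧ u l = u n := by
  let first : α → ℕ := fun x => sInf {l | u l = x}
  obtain ⟨b, hb⟩ := (Set.finite_range first).bddAbove
  exact ⟨b, fun n => ⟨first (u n), hb ⟨u n, rfl⟩, Nat.sInf_le rfl,
    Nat.sInf_mem (s := {l | u l = u n}) ⟨n, rfl⟩⟩⟩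

theorem IsPlay.exists_lasso [Finite V] {ρ : ℕ → V} (hρ : G.IsPlay ρ) :
    ∃ (b : ℕ) (L : G.PlayPresentation (Fin (b + 1))),
      Anticipates ρ L.play ∧ Anticipates L.play ρ := by
  obtain ⟨b, hb⟩ := exists_forall_exists_le_apply_eq ρ
  obtain ⟨a, hab, -, heq⟩ := hb (b + 1)
  refine ⟨b, hρ.lasso ⟨a, Nat.lt_succ_of_le hab⟩ heq, fun n => ?_, fun n => ?_⟩
  · exact ⟨_, val_iterate_lassoNext_le _ n, rfl⟩
  · obtain ⟨l, hlb, hln, hl⟩ := hb n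
    exact ⟨l, hln, (congrArg ρ (val_iterate_lassoNext_of_le _ hlb)).trans hl⟩

/-! ### Grim trigger strategies -/

namespace PlayPresentation

variable {K : Type*} (L : G.PlayPresentation K) (pun : P → V → V)

open Classical in
/-- The memory update of the grim trigger strategy. The state `Sum.inl k` means that the history
has followed the presented play up to position `k`, and `Sum.inr k` that it left the
play right after position `k`, by a move of the owner of `L.label k`. -/
noncomputable def trigger : K ⊕ K → V → K ⊕ K
  | Sum.inl k, v => if v = L.label (L.next k) then Sum.inl (L.next k) else Sum.inr k
  | Sum.inr k, _ => Sum.inr k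

/-- The memory state of the grim trigger strategy after a history. -/
noncomputable def state (h : List V) : K ⊕ K := runMemory L.trigger (Sum.inl L.start) h

/-- The move of the grim trigger strategy in a given memory state and vertex: follow the presented
play, or use `pun` against the player who left it. -/
def move : K ⊕ K → V → V
  | Sum.inl k, _ => L.label (L.next k)
  | Sum.inr k, v => pun (G.owner (L.label k)) v

/-- The strategy profile in which all players follow the presented play and punish, according to
`pun`, the first player who leaves it. -/
noncomputable def grimTrigger : P → List V → V :=
  fun _ h => L.move pun (L.state h) (G.lastV h)

theorem lastV_eq_label_of_state_eq_inl {h : List V} {k : K} (hhead : h.head? = some G.v0)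
    (hk : L.state h = Sum.inl k) : G.lastV h = L.label k := by
  obtain ⟨t, rfl⟩ := List.head?_eq_some_iff.1 hhead
  induction t using List.reverseRecOn generalizing k with
  | nil => rw [← Sum.inl.inj hk, L.label_start]; rfl
  | append_singleton t w _ =>
    rw [← List.cons_append] at hk ⊢
    rw [state, runMemory_append _ _ (List.cons_ne_nil _ _), List.foldl_cons, List.foldl_nil] at hk
    rw [lastV_concat]
    cases hs : runMemory L.trigger (Sum.inl L.start) (G.v0 :: t) with
    | inl k' =>
      rw [hs, trigger] at hk
      split_ifs at hk with hw
      rwa [← Sum.inl.inj hk]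
    | inr k' => rw [hs, trigger] at hk; cases hk

theorem isProfile_grimTrigger {pun : P → V → V} (hpun : ∀ j v, G.E v (pun j v)) :
    G.IsProfile (L.grimTrigger pun) := by
  intro i h hh _
  rw [grimTrigger]
  cases hs : L.state h with
  | inl k =>
    rw [L.lastV_eq_label_of_state_eq_inl hh.2.1 hs]
    exact L.edge k
  | inr k => exact hpun _ _

theorem finiteMemoryProfile_grimTrigger [Finite V] [Finite K] :
    G.FiniteMemoryProfile (L.grimTrigger pun) :=
  fun i => finiteMemory_of_runMemory i L.trigger (Sum.inl L.start) (L.move pun)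

theorem state_outHist_succ (prof : P → List V → V) (n : ℕ) :
    L.state (G.outHist prof (n + 1)) =
      L.trigger (L.state (G.outHist prof n)) (G.outcome prof (n + 1)) :=
  runMemory_outHist_succ _ _ prof n

theorem state_outHist_grimTrigger (n : ℕ) :
    L.state (G.outHist (L.grimTrigger pun) n) = Sum.inl (L.next^[n] L.start) := by
  induction n with
  | zero => rfl
  | succ n ih =>
    rw [state_outHist_succ, outcome_succ, grimTrigger, ih, trigger, move, if_pos rfl,
      Function.iterate_succ_apply']

theorem outcome_eq_label_of_state_eq_inl {prof : P → List V → V} {n : ℕ} {k : K}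
    (hk : L.state (G.outHist prof n) = Sum.inl k) : G.outcome prof n = L.label k :=
  L.lastV_eq_label_of_state_eq_inl (head?_outHist prof n) hk

theorem outcome_grimTrigger : G.outcome (L.grimTrigger pun) = L.play :=
  funext fun n => L.outcome_eq_label_of_state_eq_inl (L.state_outHist_grimTrigger pun n)

section Deviation

variable [DecidableEq P] {j : P} {σ : List V → V}

theorem outcome_succ_update_grimTrigger {n : ℕ}
    (hj : G.owner (G.outcome (Function.update (L.grimTrigger pun) j σ) n) ≠ j) :
    G.outcome (Function.update (L.grimTrigger pun) j σ) (n + 1) =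
      L.move pun (L.state (G.outHist (Function.update (L.grimTrigger pun) j σ) n))
        (G.outcome (Function.update (L.grimTrigger pun) j σ) n) := by
  rw [outcome_succ, Function.update_of_ne hj]
  rfl

theorem state_outHist_update_grimTrigger (j : P) (σ : List V → V) (n : ℕ) :
    L.state (G.outHist (Function.update (L.grimTrigger pun) j σ) n) =
        Sum.inl (L.next^[n] L.start) ∨
      ∃ k, L.state (G.outHist (Function.update (L.grimTrigger pun) j σ) n) = Sum.inr k ∧
        G.owner (L.label k) = j := by
  induction n with
  | zero => exact Or.inl rfl
  | succ n ih =>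
    rw [state_outHist_succ]
    obtain hs | ⟨k, hs, hk⟩ := ih
    · rw [hs, trigger, Function.iterate_succ_apply']
      split_ifs with hfollow
      · exact Or.inl rfl
      · refine Or.inr ⟨_, rfl, ?_⟩
        by_contra hj
        rw [← L.outcome_eq_label_of_state_eq_inl hs] at hj
        exact hfollow (by rw [L.outcome_succ_update_grimTrigger pun hj, hs, move])
    · exact Or.inr ⟨k, by rw [hs, trigger], hk⟩

variable {pun}

-- At every step against the punishment, the attractor index of `j` drops by at most one, so his
-- guaranteed arrival time never improves on what it was when he left the play.
theorem cost_play_le_of_outcome_update_mem_attractor (hL : G.IsStable L.play)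
    (hpun : G.IsPunishment pun) (hσ : G.IsStrategy j σ) {n m : ℕ}
    (hm : G.outcome (Function.update (L.grimTrigger pun) j σ) n ∈ G.attractor j m) :
    G.cost j L.play ≤ ((n + m : ℕ) : ℕ∞) := by
  induction n generalizing m with
  | zero => exact hL j 0 m (by rwa [play, Function.iterate_zero_apply, L.label_start])
  | succ n ih =>
    have hback : G.outcome (Function.update (L.grimTrigger pun) j σ) n ∈ G.attractor j (m + 1) →
        G.cost j L.play ≤ ((n + 1 + m : ℕ) : ℕ∞) := by
      rw [Nat.succ_add_eq_add_succ]
      exact ih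
    by_cases hj : G.owner (G.outcome (Function.update (L.grimTrigger pun) j σ) n) = j
    · have hprof := L.isProfile_grimTrigger fun i v => (hpun i v).1
      exact hback (mem_attractor_succ_of_owner_eq hj ((isPlay_outcome (hprof.update hσ)).2 n) hm)
    rw [L.outcome_succ_update_grimTrigger pun hj] at hm
    obtain hs | ⟨k, hs, hk⟩ := L.state_outHist_update_grimTrigger pun j σ n
    · rw [hs, move, ← Function.iterate_succ_apply' L.next n] at hm
      exact hL j (n + 1) m hm
    · rw [hs, move, hk] at hm
      exact hback ((hpun j _).2 hj m hm)

end Deviation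

theorem isNash_grimTrigger [DecidableEq P] {pun : P → V → V} (hL : G.IsStable L.play)
    (hpun : G.IsPunishment pun) : G.IsNash (L.grimTrigger pun) := by
  intro j σ hσ
  rw [L.outcome_grimTrigger pun]
  exact le_cost fun n hn =>
    L.cost_play_le_of_outcome_update_mem_attractor hL hpun hσ (m := 0) hn

end PlayPresentation

end ReachGame

theorem finiteMemory_nash_same_type_general {P V : Type} [DecidableEq P] [Finite V]
    (G : ReachGame P V)
    (prof : P → List V → V) (hprof : G.IsProfile prof) (hnash : G.IsNash prof) :
    ∃ τ : P → List V → V,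
      G.IsProfile τ ∧ G.FiniteMemoryProfile τ ∧ G.IsNash τ ∧
      G.typeOf τ = G.typeOf prof := by
  obtain ⟨b, L, hρL, hLρ⟩ := (ReachGame.isPlay_outcome hprof).exists_lasso
  have hL : G.IsStable L.play := (hnash.isStable_outcome hprof).of_anticipates hρL hLρ
  obtain ⟨pun, hpun⟩ := G.exists_isPunishment fun v => Set.toFinite {w | G.E v w}
  rw [← L.outcome_grimTrigger pun] at hρL hLρ
  exact ⟨L.grimTrigger pun, L.isProfile_grimTrigger fun j v => (hpun j v).1,
    L.finiteMemoryProfile_grimTrigger pun, L.isNash_grimTrigger hL hpun,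
    hρL.typeOf_subset.antisymm hLρ.typeOf_subset⟩

/-- If a quantitative multiplayer reachability game `G` has a Nash
equilibrium, then it has a finite-memory Nash equilibrium of the same type. -/
theorem finiteMemory_nash_same_type {P V : Type} [Fintype P] [DecidableEq P] [Fintype V]
    (G : ReachGame P V)
    (prof : P → List V → V) (hprof : G.IsProfile prof) (hnash : G.IsNash prof) :
    ∃ τ : P → List V → V,
      G.IsProfile τ ∧ G.FiniteMemoryProfile τ ∧ G.IsNash τ ∧
      G.typeOf τ = G.typeOf prof :=
  finiteMemory_nash_same_type_general G prof hprof hnash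
end

section
/- Every quantitative multiplayer reachability/safety game has a finite-memory Nash equilibrium. -/
/-- A quantitative multiplayer reachability/safety game: the set of players is
partitioned into the players in `reach` (reachability objectives, `target i` being
the goal set `F_i`) and the remaining players (safety objectives, `target i` being
the bad set `B_i`).  The finite vertex set is partitioned among the players via
`owner`, `v0` is the initial vertex and every vertex has an outgoing `E`-edge. -/
structure RSGame (P : Type) (V : Type) where
  reach : Set P
  owner : V → P
  v0 : V
  E : V → V → Prop
  total : ∀ v : V, ∃ w : V, E v w
  target : P → Set V

namespace RSGame

variable {P V : Type} [DecidableEq P] (G : RSGame P V)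

/-- The last vertex of a history (with default `v0`). -/
def lastV (h : List V) : V := h.getLastD G.v0

/-- A history: a nonempty finite path in the graph starting at `v0`. -/
def IsHistory (h : List V) : Prop :=
  h ≠ [] ∧ h.head? = some G.v0 ∧ List.Chain' G.E h

/-- `σ` is a (total encoding of a) strategy of player `i`. -/
def IsStrategy (i : P) (σ : List V → V) : Prop :=
  ∀ h : List V, G.IsHistory h → G.owner (G.lastV h) = i → G.E (G.lastV h) (σ h)

/-- A strategy profile: one strategy per player. -/
def IsProfile (prof : P → List V → V) : Prop :=
  ∀ i : P, G.IsStrategy i (prof i)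

/-- The history of length `n` obtained by following the profile `prof` from `v0`. -/
def outHist (prof : P → List V → V) : ℕ → List V
  | 0 => [G.v0]
  | n + 1 => outHist prof n ++ [prof (G.owner (G.lastV (outHist prof n))) (outHist prof n)]

/-- The outcome play of the strategy profile `prof`. -/
def outcome (prof : P → List V → V) (n : ℕ) : V :=
  G.lastV (G.outHist prof n)

open Classical in
/-- The cost of player `i` for the play `ρ`.  For a reachability player it is the
least `l` with `ρ l ∈ F_i` (and `+∞` if there is none); for a safety player it is
`-l` where `l` is the least index with `ρ l ∈ B_i` (and `-∞` if there is none). -/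
noncomputable def cost (i : P) (ρ : ℕ → V) : EReal :=
  if i ∈ G.reach then
    sInf {x : EReal | ∃ l : ℕ, x = ((l : ℝ) : EReal) ∧ ρ l ∈ G.target i}
  else
    sSup {x : EReal | ∃ l : ℕ, x = -((l : ℝ) : EReal) ∧ ρ l ∈ G.target i}

/-- Nash equilibrium: no player can strictly decrease his cost by a unilateral
deviation. -/
def IsNash (prof : P → List V → V) : Prop :=
  ∀ (j : P) (σ' : List V → V), G.IsStrategy j σ' →
    G.cost j (G.outcome prof) ≤ G.cost j (G.outcome (Function.update prof j σ'))

/-- `h ≈_σ h'` for the strategy `σ` of player `i`. -/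
def MemEq (i : P) (σ : List V → V) (h h' : List V) : Prop :=
  ∀ δ : List V,
    G.IsHistory (h ++ δ) → G.owner (G.lastV (h ++ δ)) = i →
    G.IsHistory (h' ++ δ) → G.owner (G.lastV (h' ++ δ)) = i →
    σ (h ++ δ) = σ (h' ++ δ)

/-- A strategy of player `i` is finite-memory if `≈_σ` has finitely many classes on
histories. -/
def FiniteMemory (i : P) (σ : List V → V) : Prop :=
  ∃ S : Finset (List V), ∀ h : List V, G.IsHistory h →
    ∃ h' ∈ S, G.IsHistory h' ∧ G.MemEq i σ h h'

/-- A profile is finite-memory if each of its strategies is. -/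
def FiniteMemoryProfile (prof : P → List V → V) : Prop :=
  ∀ i : P, G.FiniteMemory i (prof i)

end RSGame

/-!
For each player `j`, consider the zero-sum game in which `j` plays against the coalition of all
other players, and in which one side minimizes and the other maximizes the time needed to reach
`target j`. The value of this game is a fixed point of its Bellman operator, and moves attaining the
extremum in the Bellman equation are positional optimal moves for both sides.

In the equilibrium every player plays his own optimal moves until somebody leaves the resulting
play; from then on everybody plays the optimal moves of the game of this first deviator `j`. A
deviation of `j` at a vertex `v` therefore leads to a play in which the coalition is optimal from
`v` on, while `j` himself would have been optimal from `v` on without deviating. By the saddle-point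
property the latter play is at least as good for `j`, so the deviation does not pay. The strategy
only has to remember the current vertex and the vertex of the first deviation.
-/

namespace RSGame

section ReachTime

variable {V : Type*} {E : V → V → Prop} {A T : Set V}

variable (E A T) in
open Classical in
/-- The Bellman operator of the zero-sum game on the graph `E` in which the owner of the vertices in
`A` minimizes, and the owner of the other vertices maximizes, the number of steps needed to
reach `T`. -/
noncomputable def bellman : (V → ℕ∞) →o (V → ℕ∞) where
  toFun r v :=
    if v ∈ T then 0
    else if v ∈ A then ⨅ w : {w // E v w}, (r w + 1)
    else ⨆ w : {w // E v w}, (r w + 1)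
  monotone' r r' hr v := by
    have step_mono (w : V) : r w + 1 ≤ r' w + 1 := add_le_add_left (hr w) 1
    dsimp only
    split_ifs
    · exact le_rfl
    · exact iInf_mono fun w => step_mono w
    · exact iSup_mono fun w => step_mono w

variable (E A T) in
/-- The value of the zero-sum game of `bellman`: the number of steps in which `T` is reached under
optimal play, with value `⊤` where the maximizer can avoid `T` forever. -/
noncomputable def reachTime : V → ℕ∞ := (bellman E A T).lfp

theorem bellman_reachTime : bellman E A T (reachTime E A T) = reachTime E A T :=
  (bellman E A T).map_lfp

theorem reachTime_of_mem {v : V} (hT : v ∈ T) : reachTime E A T v = 0 := by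
  rw [← bellman_reachTime]
  exact if_pos hT

theorem reachTime_of_mem_minimizer {v : V} (hT : v ∉ T) (hA : v ∈ A) :
    reachTime E A T v = ⨅ w : {w // E v w}, (reachTime E A T w + 1) := by
  conv_lhs => rw [← bellman_reachTime]
  exact (if_neg hT).trans (if_pos hA)

theorem reachTime_of_notMem_minimizer {v : V} (hT : v ∉ T) (hA : v ∉ A) :
    reachTime E A T v = ⨆ w : {w // E v w}, (reachTime E A T w + 1) := by
  conv_lhs => rw [← bellman_reachTime]
  exact (if_neg hT).trans (if_neg hA)

theorem reachTime_le_succ {v w : V} (hT : v ∉ T) (hA : v ∈ A) (hvw : E v w) :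
    reachTime E A T v ≤ reachTime E A T w + 1 := by
  rw [reachTime_of_mem_minimizer hT hA]
  exact iInf_le (fun w : {w // E v w} => reachTime E A T w + 1) ⟨w, hvw⟩

theorem reachTime_succ_le {v w : V} (hT : v ∉ T) (hA : v ∉ A) (hvw : E v w) :
    reachTime E A T w + 1 ≤ reachTime E A T v := by
  rw [reachTime_of_notMem_minimizer hT hA]
  exact le_iSup (fun w : {w // E v w} => reachTime E A T w + 1) ⟨w, hvw⟩

variable (E A T) in
theorem exists_reachTime_eq_succ (v : V) [Finite {w // E v w}] [Nonempty {w // E v w}] :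
    ∃ w, E v w ∧ (v ∉ T → reachTime E A T v = reachTime E A T w + 1) := by
  by_cases hA : v ∈ A
  · obtain ⟨w, hw⟩ := ciInf_mem fun w : {w // E v w} => reachTime E A T w + 1
    exact ⟨w, w.2, fun hT => (reachTime_of_mem_minimizer hT hA).trans hw.symm⟩
  · obtain ⟨w, hw⟩ :=
      exists_eq_ciSup_of_finite (f := fun w : {w // E v w} => reachTime E A T w + 1)
    exact ⟨w, w.2, fun hT => (reachTime_of_notMem_minimizer hT hA).trans hw.symm⟩

end ReachTime

section ReachesNoLater

variable {V : Type*} {E : V → V → Prop} {A T : Set V} {ρ ρ' : ℕ → V}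

/-- The first visit of the play `ρ` to `T` happens no later than that of `ρ'`, a play that never
visits `T` counting as visiting it at time `∞`. -/
def ReachesNoLater (T : Set V) (ρ ρ' : ℕ → V) : Prop :=
  ∀ l, ρ' l ∈ T → ∃ l' ≤ l, ρ l' ∈ T

theorem ReachesNoLater.of_eq_upto {k : ℕ} (heq : ∀ m ≤ k, ρ m = ρ' m)
    (hshift : ReachesNoLater T (fun n => ρ (k + n)) (fun n => ρ' (k + n))) :
    ReachesNoLater T ρ ρ' := by
  intro l hl
  rcases le_total l k with hlk | hkl
  · exact ⟨l, le_rfl, by rwa [heq l hlk]⟩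
  · obtain ⟨d, rfl⟩ := Nat.exists_eq_add_of_le hkl
    obtain ⟨d', hd', hmem⟩ := hshift d hl
    exact ⟨k + d', by lia, hmem⟩

theorem le_of_mem_of_le_succ {r : V → ℕ∞} (hr : ∀ v ∈ T, r v = 0)
    (hρ : ∀ n, ρ n ∉ T → r (ρ n) ≤ r (ρ (n + 1)) + 1) {d : ℕ} (hd : ρ d ∈ T) : r (ρ 0) ≤ d := by
  induction d generalizing ρ with
  | zero => simp [hr _ hd]
  | succ d ih =>
    by_cases h0 : ρ 0 ∈ T
    · simp [hr _ h0]
    · have htail : r (ρ 1) ≤ d := ih (ρ := fun n => ρ (n + 1)) (fun n => hρ (n + 1)) hd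
      calc r (ρ 0) ≤ r (ρ 1) + 1 := hρ 0 h0
        _ ≤ d + 1 := add_le_add_left htail 1
        _ = (d + 1 : ℕ) := by push_cast; rfl

theorem exists_mem_of_succ_le {r : V → ℕ∞} (hρ : ∀ n, ρ n ∉ T → r (ρ (n + 1)) + 1 ≤ r (ρ n))
    {d : ℕ} (hd : r (ρ 0) ≤ d) : ∃ l ≤ d, ρ l ∈ T := by
  induction d generalizing ρ with
  | zero =>
    refine ⟨0, le_rfl, by_contra fun h0 => ?_⟩
    simpa using (hρ 0 h0).trans hd
  | succ d ih =>
    by_cases h0 : ρ 0 ∈ T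
    · exact ⟨0, Nat.zero_le _, h0⟩
    · have htail : r (ρ 1) ≤ d := by
        have hsucc : r (ρ 1) + 1 ≤ d + 1 := by exact_mod_cast (hρ 0 h0).trans hd
        exact (ENat.add_le_add_iff_right ENat.one_ne_top).1 hsucc
      obtain ⟨l, hl, hmem⟩ := ih (ρ := fun n => ρ (n + 1)) (fun n => hρ (n + 1)) htail
      exact ⟨l + 1, by lia, hmem⟩

theorem ReachesNoLater.of_optimal {s : V → V}
    (hs : ∀ v, v ∉ T → reachTime E A T v = reachTime E A T (s v) + 1) (h0 : ρ 0 = ρ' 0)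
    (hE : ∀ n, E (ρ n) (ρ (n + 1))) (hρ : ∀ n, ρ n ∈ A → ρ (n + 1) = s (ρ n))
    (hE' : ∀ n, E (ρ' n) (ρ' (n + 1))) (hρ' : ∀ n, ρ' n ∉ A → ρ' (n + 1) = s (ρ' n)) :
    ReachesNoLater T ρ ρ' := by
  intro l hl
  have hdescend (n : ℕ) (hT : ρ n ∉ T) :
      reachTime E A T (ρ (n + 1)) + 1 ≤ reachTime E A T (ρ n) := by
    by_cases hA : ρ n ∈ A
    · rw [hρ n hA, ← hs _ hT]
    · exact reachTime_succ_le hT hA (hE n)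
  have hdelay (n : ℕ) (hT : ρ' n ∉ T) :
      reachTime E A T (ρ' n) ≤ reachTime E A T (ρ' (n + 1)) + 1 := by
    by_cases hA : ρ' n ∈ A
    · exact reachTime_le_succ hT hA (hE' n)
    · rw [hρ' n hA, ← hs _ hT]
  exact exists_mem_of_succ_le hdescend
    (h0 ▸ le_of_mem_of_le_succ (fun _ => reachTime_of_mem) hdelay hl)

end ReachesNoLater

section Cost

variable {P V : Type} (G : RSGame P V) {j : P} {ρ ρ' : ℕ → V}

theorem cost_le_of_mem_reach (hj : j ∈ G.reach) (h : ReachesNoLater (G.target j) ρ ρ') :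
    G.cost j ρ ≤ G.cost j ρ' := by
  rw [cost, cost, if_pos hj, if_pos hj]
  refine le_sInf ?_
  rintro _ ⟨l, rfl, hl⟩
  obtain ⟨l', hle, hl'⟩ := h l hl
  refine le_trans (sInf_le ⟨l', rfl, hl'⟩) ?_
  exact_mod_cast hle

theorem cost_le_of_notMem_reach (hj : j ∉ G.reach) (h : ReachesNoLater (G.target j) ρ' ρ) :
    G.cost j ρ ≤ G.cost j ρ' := by
  rw [cost, cost, if_neg hj, if_neg hj]
  refine sSup_le ?_
  rintro _ ⟨l, rfl, hl⟩
  obtain ⟨l', hle, hl'⟩ := h l hl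
  refine le_trans ?_ (le_sSup ⟨l', rfl, hl'⟩)
  rw [EReal.neg_le_neg_iff]
  exact_mod_cast hle

end Cost

section OptimalMove

variable {P V : Type} (G : RSGame P V)

/-- The vertices of the side that wants to reach `target j` early in the zero-sum game of player `j`
against all others: those of `j` if `j` has a reachability objective, those of the others if `j` has
a safety objective. -/
def minimizerVertices (j : P) : Set V := {v | G.owner v = j ↔ j ∈ G.reach}

variable [Finite V]

theorem exists_optimalMove (j : P) (v : V) :
    ∃ w, G.E v w ∧ (v ∉ G.target j →
      reachTime G.E (G.minimizerVertices j) (G.target j) v =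
        reachTime G.E (G.minimizerVertices j) (G.target j) w + 1) :=
  have : Nonempty {w // G.E v w} := nonempty_subtype.2 (G.total v)
  exists_reachTime_eq_succ G.E (G.minimizerVertices j) (G.target j) v

/-- A positional optimal move at `v` in the zero-sum game of player `j` against all others, for
whichever side owns `v`. -/
noncomputable def optimalMove (j : P) (v : V) : V := (G.exists_optimalMove j v).choose

theorem optimalMove_edge (j : P) (v : V) : G.E v (G.optimalMove j v) :=
  (G.exists_optimalMove j v).choose_spec.1

theorem reachTime_optimalMove (j : P) (v : V) (hT : v ∉ G.target j) :
    reachTime G.E (G.minimizerVertices j) (G.target j) v =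
      reachTime G.E (G.minimizerVertices j) (G.target j) (G.optimalMove j v) + 1 :=
  (G.exists_optimalMove j v).choose_spec.2 hT

theorem cost_le_of_optimalMove {j : P} {ρ ρ' : ℕ → V} {k : ℕ} (heq : ∀ m ≤ k, ρ' m = ρ m)
    (hE : ∀ n, G.E (ρ n) (ρ (n + 1)))
    (hρ : ∀ n, G.owner (ρ n) = j → ρ (n + 1) = G.optimalMove j (ρ n))
    (hE' : ∀ n, G.E (ρ' n) (ρ' (n + 1)))
    (hρ' : ∀ n ≥ k, G.owner (ρ' n) ≠ j → ρ' (n + 1) = G.optimalMove j (ρ' n)) :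
    G.cost j ρ ≤ G.cost j ρ' := by
  have hdev (n : ℕ) := hρ' (k + n) (Nat.le_add_right k n)
  by_cases hj : j ∈ G.reach
  · refine G.cost_le_of_mem_reach hj (.of_eq_upto (fun m hm => (heq m hm).symm) ?_)
    exact .of_optimal (G.reachTime_optimalMove j) (heq k le_rfl).symm
      (fun n => hE (k + n)) (fun n hA => hρ (k + n) (hA.2 hj))
      (fun n => hE' (k + n)) (fun n hA => hdev n fun howner => hA (iff_of_true howner hj))
  · refine G.cost_le_of_notMem_reach hj (.of_eq_upto heq ?_)
    refine .of_optimal (G.reachTime_optimalMove j) (heq k le_rfl)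
      (fun n => hE' (k + n)) (fun n hA => hdev n fun howner => hj (hA.1 howner))
      (fun n => hE (k + n)) (fun n hA => hρ (k + n) ?_)
    exact by_contra fun howner => hA (iff_of_false howner hj)

end OptimalMove

section Outcome

variable {P V : Type} (G : RSGame P V)

theorem lastV_concat (h : List V) (v : V) : G.lastV (h ++ [v]) = v := by
  simp [lastV]

variable {G} {prof : P → List V → V}

theorem IsHistory.concat {h : List V} (hh : G.IsHistory h) {v : V} (hv : G.E (G.lastV h) v) :
    G.IsHistory (h ++ [v]) := by
  obtain ⟨-, hhead, hchain⟩ := hh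
  refine ⟨by simp, by simp [List.head?_append, hhead],
    hchain.append (List.isChain_singleton v) ?_⟩
  intro x hx y hy
  obtain rfl : y = v := by simpa [eq_comm] using hy
  have hlast : G.lastV h = x := by
    rw [lastV, List.getLastD_eq_getLast?, Option.mem_def.1 hx, Option.getD_some]
  rwa [← hlast]

theorem isHistory_outHist (hprof : G.IsProfile prof) (n : ℕ) : G.IsHistory (G.outHist prof n) := by
  induction n with
  | zero => exact ⟨List.cons_ne_nil _ _, rfl, List.isChain_singleton _⟩
  | succ n ih => exact ih.concat (hprof _ _ ih rfl)

theorem outHist_ne_nil (n : ℕ) : G.outHist prof n ≠ [] := by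
  cases n <;> simp [outHist]

theorem outcome_succ (n : ℕ) :
    G.outcome prof (n + 1) = prof (G.owner (G.outcome prof n)) (G.outHist prof n) :=
  G.lastV_concat _ _

theorem outcome_edge (hprof : G.IsProfile prof) (n : ℕ) :
    G.E (G.outcome prof n) (G.outcome prof (n + 1)) := by
  rw [outcome_succ]
  exact hprof _ _ (isHistory_outHist hprof n) rfl

theorem IsProfile.update [DecidableEq P] (hprof : G.IsProfile prof) {j : P} {σ : List V → V}
    (hσ : G.IsStrategy j σ) : G.IsProfile (Function.update prof j σ) := by
  intro i
  obtain rfl | hi := eq_or_ne i j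
  · rwa [Function.update_self]
  · rw [Function.update_of_ne hi]
    exact hprof i

end Outcome

section FiniteMemory

variable {P V : Type} {G : RSGame P V}

theorem finiteMemory_of_memEq {Q : Type*} [Finite Q] (mem : List V → Q) {i : P} {σ : List V → V}
    (hmem : ∀ h h', G.IsHistory h → G.IsHistory h' → mem h = mem h' → G.MemEq i σ h h') :
    G.FiniteMemory i σ := by
  obtain ⟨S, hS, hbij⟩ := Set.exists_subset_bijOn {h | G.IsHistory h} mem
  have hfinite : S.Finite := hbij.finite_iff_finite.2 (Set.toFinite _)
  refine ⟨hfinite.toFinset, fun h hh => ?_⟩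
  obtain ⟨h', hh', heq⟩ := hbij.surjOn (Set.mem_image_of_mem mem hh)
  exact ⟨h', hfinite.mem_toFinset.2 hh', hS hh', hmem h h' hh (hS hh') heq.symm⟩

end FiniteMemory

section TriggerStrategy

variable {P V : Type} (G : RSGame P V) (s : P → V → V)

/-- The move prescribed in the memory state `(v, d)`, where `v` is the current vertex and `d` is the
vertex of the first deviation, if there was one: the owner of `v` uses his own moves `s (owner v)`
as long as nobody has deviated, and the moves `s j` afterwards, where `j` is the first deviator. -/
def prescribedMove (q : V × Option V) : V := s (G.owner (q.2.getD q.1)) q.1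

open Classical in
/-- The update of the memory state of `prescribedMove` when the play moves on to `v`. -/
noncomputable def memoryStep (q : V × Option V) (v : V) : V × Option V :=
  (v, if v = G.prescribedMove s q then q.2 else some (q.2.getD q.1))

/-- The memory state of `prescribedMove` after a history. The head of the history is skipped, since
it is the initial vertex. -/
noncomputable def memory (h : List V) : V × Option V :=
  h.tail.foldl (G.memoryStep s) (G.v0, none)

/-- The strategy, common to all players, of following the moves `s i` of each player `i` until some
player `j` deviates, and the moves `s j` from then on. -/
noncomputable def triggerStrategy (h : List V) : V := G.prescribedMove s (G.memory s h)

variable {G s}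

theorem memory_append {h : List V} (hh : h ≠ []) (δ : List V) :
    G.memory s (h ++ δ) = δ.foldl (G.memoryStep s) (G.memory s h) := by
  rw [memory, List.tail_append_of_ne_nil hh, List.foldl_append, memory]

theorem memory_fst {h : List V} (hh : G.IsHistory h) : (G.memory s h).1 = G.lastV h := by
  obtain ⟨hne, hhead, -⟩ := hh
  obtain rfl | ⟨l, v, rfl⟩ := List.eq_nil_or_concat' h
  · exact absurd rfl hne
  · rw [lastV_concat]
    obtain rfl | hl := eq_or_ne l []
    · exact (Option.some.inj hhead).symm
    · rw [memory_append hl]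
      rfl

theorem isStrategy_triggerStrategy (hs : ∀ j v, G.E v (s j v)) (i : P) :
    G.IsStrategy i (G.triggerStrategy s) := by
  intro h hh _
  rw [triggerStrategy, prescribedMove, memory_fst hh]
  exact hs _ _

theorem finiteMemory_triggerStrategy [Finite V] (i : P) :
    G.FiniteMemory i (G.triggerStrategy s) := by
  refine finiteMemory_of_memEq (G.memory s) fun h h' hh hh' heq δ _ _ _ _ => ?_
  rw [triggerStrategy, triggerStrategy, memory_append hh.1, memory_append hh'.1, heq]

end TriggerStrategy

section Deviation

variable {P V : Type} (G : RSGame P V) (s : P → V → V) (prof : P → List V → V)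

/-- The vertex at which the outcome of `prof` first departed from the moves prescribed by `s`, if
this happened during the first `n` moves. -/
noncomputable def firstDeviation (n : ℕ) : Option V := (G.memory s (G.outHist prof n)).2

/-- The play in which every player `i` always uses his moves `s i`. -/
def mainPlay (n : ℕ) : V := (fun v => s (G.owner v) v)^[n] G.v0

variable {G s prof}

theorem mainPlay_succ (n : ℕ) :
    G.mainPlay s (n + 1) = s (G.owner (G.mainPlay s n)) (G.mainPlay s n) :=
  Function.iterate_succ_apply' _ _ _

theorem memory_outHist_succ (n : ℕ) :
    G.memory s (G.outHist prof (n + 1)) =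
      G.memoryStep s (G.memory s (G.outHist prof n)) (G.outcome prof (n + 1)) := by
  rw [outcome_succ, outHist, memory_append (outHist_ne_nil n)]
  rfl

theorem memory_outHist (n : ℕ) :
    G.memory s (G.outHist prof n) = (G.outcome prof n, G.firstDeviation s prof n) := by
  refine Prod.ext ?_ rfl
  cases n with
  | zero => rfl
  | succ n => rw [memory_outHist_succ, memoryStep]

theorem firstDeviation_zero : G.firstDeviation s prof 0 = none := rfl

open Classical in
theorem firstDeviation_succ (n : ℕ) :
    G.firstDeviation s prof (n + 1) =
      if G.outcome prof (n + 1) =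
          s (G.owner ((G.firstDeviation s prof n).getD (G.outcome prof n))) (G.outcome prof n)
      then G.firstDeviation s prof n
      else some ((G.firstDeviation s prof n).getD (G.outcome prof n)) := by
  rw [firstDeviation, memory_outHist_succ, memory_outHist]
  rfl

theorem outcome_succ_of_triggerStrategy {n : ℕ}
    (h : prof (G.owner (G.outcome prof n)) = G.triggerStrategy s) :
    G.outcome prof (n + 1) =
      s (G.owner ((G.firstDeviation s prof n).getD (G.outcome prof n))) (G.outcome prof n) := by
  rw [outcome_succ, h, triggerStrategy, memory_outHist]
  rfl

theorem outcome_eq_mainPlay {n : ℕ} (hn : G.firstDeviation s prof n = none) :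
    ∀ m ≤ n, G.outcome prof m = G.mainPlay s m := by
  induction n with
  | zero =>
    intro m hm
    obtain rfl := Nat.le_zero.1 hm
    rfl
  | succ n ih =>
    rw [firstDeviation_succ] at hn
    split_ifs at hn with hmove
    rintro m (_ | hm)
    · rw [hmove, hn, Option.getD_none, mainPlay_succ, ih hn n le_rfl]
    · exact ih hn m hm

theorem outcome_triggerStrategy :
    G.outcome (fun _ => G.triggerStrategy s) = G.mainPlay s := by
  funext n
  refine outcome_eq_mainPlay ?_ n le_rfl
  induction n with
  | zero => exact firstDeviation_zero
  | succ n ih => rw [firstDeviation_succ, if_pos (outcome_succ_of_triggerStrategy rfl), ih]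

theorem firstDeviation_eq_some_of_le {k n : ℕ} {d : V} (hkn : k ≤ n)
    (hk : G.firstDeviation s prof k = some d) : G.firstDeviation s prof n = some d := by
  induction n, hkn using Nat.le_induction with
  | base => exact hk
  | succ n _ ih => rw [firstDeviation_succ, ih, Option.getD_some, ite_self]

theorem exists_firstDeviation_eq_some {n : ℕ} (hn : G.firstDeviation s prof n ≠ none) :
    ∃ k, G.firstDeviation s prof k = none ∧
      G.firstDeviation s prof (k + 1) = some (G.outcome prof k) := by
  induction n with
  | zero => exact absurd firstDeviation_zero hn
  | succ n ih =>
    by_cases hnone : G.firstDeviation s prof n = none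
    · refine ⟨n, hnone, ?_⟩
      rw [firstDeviation_succ, hnone] at hn ⊢
      split_ifs at hn ⊢ with hmove
      · exact absurd rfl hn
      · rfl
    · exact ih hnone

theorem owner_of_firstDeviation {j : P} (hprof : ∀ i ≠ j, prof i = G.triggerStrategy s) {k : ℕ}
    (hk : G.firstDeviation s prof k = none) (hk' : G.firstDeviation s prof (k + 1) ≠ none) :
    G.owner (G.outcome prof k) = j := by
  by_contra howner
  rw [firstDeviation_succ,
    if_pos (outcome_succ_of_triggerStrategy (hprof _ howner))] at hk'
  exact hk' hk

theorem outcome_eq_mainPlay_or_punished {j : P}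
    (hprof : ∀ i ≠ j, prof i = G.triggerStrategy s) :
    G.outcome prof = G.mainPlay s ∨ ∃ k, (∀ m ≤ k, G.outcome prof m = G.mainPlay s m) ∧
      ∀ n ≥ k, G.owner (G.outcome prof n) ≠ j →
        G.outcome prof (n + 1) = s j (G.outcome prof n) := by
  by_cases hnone : ∀ n, G.firstDeviation s prof n = none
  · exact .inl (funext fun n => outcome_eq_mainPlay (hnone n) n le_rfl)
  obtain ⟨n, hn⟩ := not_forall.1 hnone
  obtain ⟨k, hk, hk'⟩ := exists_firstDeviation_eq_some hn
  have hdeviator : G.owner (G.outcome prof k) = j :=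
    owner_of_firstDeviation hprof hk (by simp [hk'])
  refine .inr ⟨k, outcome_eq_mainPlay hk, fun n hkn howner => ?_⟩
  have hlt : k < n := lt_of_le_of_ne hkn fun h => howner (h ▸ hdeviator)
  rw [outcome_succ_of_triggerStrategy (hprof _ howner), firstDeviation_eq_some_of_le hlt hk',
    Option.getD_some, hdeviator]

end Deviation

variable {P V : Type} [DecidableEq P] [Finite V] (G : RSGame P V)

theorem isNash_triggerStrategy_optimalMove :
    G.IsNash fun _ => G.triggerStrategy G.optimalMove := by
  intro j σ hσ
  have htrigger : G.IsProfile fun _ => G.triggerStrategy G.optimalMove :=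
    isStrategy_triggerStrategy G.optimalMove_edge
  have hE := outcome_edge htrigger
  rw [outcome_triggerStrategy] at hE ⊢
  have hothers : ∀ i ≠ j, Function.update (fun _ => G.triggerStrategy G.optimalMove) j σ i =
      G.triggerStrategy G.optimalMove := fun i hi => by rw [Function.update_of_ne hi]
  rcases outcome_eq_mainPlay_or_punished hothers with hmain | ⟨k, heq, hpunish⟩
  · rw [hmain]
  · refine G.cost_le_of_optimalMove heq hE (fun n howner => ?_)
      (outcome_edge (htrigger.update hσ)) hpunish
    rw [mainPlay_succ, howner]

end RSGame

theorem exists_finiteMemory_nash_reach_safety_general {P V : Type} [DecidableEq P] [Finite V]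
    (G : RSGame P V) :
    ∃ prof : P → List V → V,
      G.IsProfile prof ∧ G.FiniteMemoryProfile prof ∧ G.IsNash prof :=
  ⟨fun _ => G.triggerStrategy G.optimalMove,
    RSGame.isStrategy_triggerStrategy G.optimalMove_edge,
    RSGame.finiteMemory_triggerStrategy,
    G.isNash_triggerStrategy_optimalMove⟩

/-- Every quantitative multiplayer reachability/safety game has a
finite-memory Nash equilibrium. -/
theorem exists_finiteMemory_nash_reach_safety {P V : Type} [Fintype P] [DecidableEq P]
    [Fintype V] (G : RSGame P V) :
    ∃ prof : P → List V → V,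
      G.IsProfile prof ∧ G.FiniteMemoryProfile prof ∧ G.IsNash prof :=
  exists_finiteMemory_nash_reach_safety_general G
end
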